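/- Assume θ_1 < 1. For every π∈Δ(K×L), the value v_θ(π) satisfies the primal recursive formula: v_θ(π) = max_{σ∈Δ(I)^K} min_{τ∈Δ(J)^L} { θ_1·G^π_{στ} + (1−θ_1)·Σ_{(i,j): P^π_{στ}(i,j)>0} P^π_{στ}(i,j)·v_{θ^+}(π_{ij}) } = min_{τ∈Δ(J)^L} max_{σ∈Δ(I)^K} { θ_1·G^π_{στ} + (1−θ_1)·Σ_{(i,j): P^π_{στ}(i,j)>0} P^π_{στ}(i,j)·v_{θ^+}(π_{ij}) }. -/

import Mathlib

open scoped BigOperators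

noncomputable section RepeatedGames

/-- Probability of a finite history (list of action pairs, in chronological
order) under behavioral strategies `s`, `t` (which map the list of past action
pairs to a mixed action). -/
def probH {I J : Type*} (s : List (I × J) → I → ℝ) (t : List (I × J) → J → ℝ) :
    List (I × J) → ℝ
  | [] => 1
  | a :: h =>
      s [] a.1 * t [] a.2 *
        probH (fun h' => s (a :: h')) (fun h' => t (a :: h')) h

/-- Expected stage payoff at stage `m+1` (i.e. after `m` completed stages). -/
def stagePay {I J : Type*} [Fintype I] [Fintype J]
    (s : List (I × J) → I → ℝ) (t : List (I × J) → J → ℝ)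
    (g : I → J → ℝ) (m : ℕ) : ℝ :=
  ∑ h : Fin m → I × J,
    probH s t (List.ofFn h) *
      ∑ i, ∑ j, s (List.ofFn h) i * t (List.ofFn h) j * g i j

/-- Behavioral strategies of a player with type set `X` and action set `A`,
observing histories in `(I × J)^*`. -/
def Strat (I J X A : Type*) [Fintype A] : Type _ :=
  {f : X → List (I × J) → A → ℝ // ∀ x h, f x h ∈ stdSimplex ℝ A}

instance {I J X A : Type*} [Fintype A] [Nonempty A] :
    Nonempty (Strat I J X A) := by
  refine ⟨⟨fun _ _ _ => (Fintype.card A : ℝ)⁻¹, fun x h => ⟨fun a => by positivity, ?_⟩⟩⟩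
  have hA : (Fintype.card A : ℝ) ≠ 0 := by
    exact_mod_cast Fintype.card_ne_zero
  simp [Finset.sum_const, Finset.card_univ, nsmul_eq_mul, mul_inv_cancel₀ hA]

/-- The auxiliary `θ`-weighted payoff `γ_θ(π, ŝ, t̂; ζ)`. -/
def payA {I J K L : Type*} [Fintype I] [Fintype J] [Fintype K] [Fintype L]
    (θ : ℕ → ℝ) (G : K → L → I → J → ℝ) (π : K × L → ℝ) (ζ : K → ℝ)
    (s : Strat I J K I) (t : Strat I J L J) : ℝ :=
  ∑ k, ∑ l, π (k, l) * ζ k *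
    ∑' m : ℕ, θ m * stagePay (s.1 k) (t.1 l) (G k l) m

/-- The `θ`-weighted payoff `γ_θ(π, ŝ, t̂)`. -/
def pay {I J K L : Type*} [Fintype I] [Fintype J] [Fintype K] [Fintype L]
    (θ : ℕ → ℝ) (G : K → L → I → J → ℝ) (π : K × L → ℝ)
    (s : Strat I J K I) (t : Strat I J L J) : ℝ :=
  payA θ G π (fun _ => 1) s t

/-- Maxmin `v⁻_θ(π)` of the repeated game `𝒢_θ(π)`. -/
def vMinus {I J K L : Type*} [Fintype I] [Fintype J] [Fintype K] [Fintype L]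
    (θ : ℕ → ℝ) (G : K → L → I → J → ℝ) (π : K × L → ℝ) : ℝ :=
  ⨆ s : Strat I J K I, ⨅ t : Strat I J L J, pay θ G π s t

/-- Minmax `v⁺_θ(π)` of the repeated game `𝒢_θ(π)`. -/
def vPlus {I J K L : Type*} [Fintype I] [Fintype J] [Fintype K] [Fintype L]
    (θ : ℕ → ℝ) (G : K → L → I → J → ℝ) (π : K × L → ℝ) : ℝ :=
  ⨅ t : Strat I J L J, ⨆ s : Strat I J K I, pay θ G π s t

/-- Dual payoff `h_θ[x,Q;ζ](p,ŝ,t̂) = γ_θ(p⊗Q, ŝ, t̂; ζ) − ⟨p,x⟩`. -/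
def hDual {I J K L : Type*} [Fintype I] [Fintype J] [Fintype K] [Fintype L]
    (θ : ℕ → ℝ) (G : K → L → I → J → ℝ) (x : K → ℝ) (Q : K → L → ℝ)
    (ζ : K → ℝ) (p : K → ℝ) (s : Strat I J K I) (t : Strat I J L J) : ℝ :=
  payA θ G (fun kl => p kl.1 * Q kl.1 kl.2) ζ s t - ∑ k, p k * x k

/-- Maxmin `w⁻_θ(x,Q;ζ)` of the dual game `𝒟[𝒢_θ](x,Q;ζ)`. -/
def wMinus {I J K L : Type*} [Fintype I] [Fintype J] [Fintype K] [Fintype L]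
    (θ : ℕ → ℝ) (G : K → L → I → J → ℝ) (x : K → ℝ) (Q : K → L → ℝ)
    (ζ : K → ℝ) : ℝ :=
  ⨆ ps : stdSimplex ℝ K × Strat I J K I, ⨅ t : Strat I J L J,
    hDual θ G x Q ζ (ps.1 : K → ℝ) ps.2 t

/-- Minmax `w⁺_θ(x,Q;ζ)` of the dual game `𝒟[𝒢_θ](x,Q;ζ)`. -/
def wPlus {I J K L : Type*} [Fintype I] [Fintype J] [Fintype K] [Fintype L]
    (θ : ℕ → ℝ) (G : K → L → I → J → ℝ) (x : K → ℝ) (Q : K → L → ℝ)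
    (ζ : K → ℝ) : ℝ :=
  ⨅ t : Strat I J L J, ⨆ ps : stdSimplex ℝ K × Strat I J K I,
    hDual θ G x Q ζ (ps.1 : K → ℝ) ps.2 t

end RepeatedGames

/-- One-stage (first-stage) behavioral strategies. -/
def OneStage (X A : Type*) [Fintype A] : Type _ :=
  {σ : X → A → ℝ // ∀ x, σ x ∈ stdSimplex ℝ A}

instance {X A : Type*} [Fintype A] [Nonempty A] : Nonempty (OneStage X A) := by
  refine ⟨⟨fun _ _ => (Fintype.card A : ℝ)⁻¹, fun x => ⟨fun a => by positivity, ?_⟩⟩⟩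
  have hA : (Fintype.card A : ℝ) ≠ 0 := by exact_mod_cast Fintype.card_ne_zero
  simp [Finset.sum_const, Finset.card_univ, nsmul_eq_mul, mul_inv_cancel₀ hA]

/-!
Idea. Replacing behavioral strategies by their realization plans (the probability contributed by
one player to each history followed by an action) makes every stage payoff bilinear on compact
convex sets, so Sion's theorem gives both players optimal strategies in every repeated game, for
any summable weights `θ` and any weights `π` on the types.

Extend `vPlus` homogeneously to unnormalised priors. Splitting a play after the first stage writes
its payoff as a first-stage payoff plus the payoffs of the continuation games, whose priors are the
unnormalised laws `P^π_{στ}(·, ·, i, j)`. Let `S`, `T` be optimal in the repeated game. Against `T`,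
which is fixed, player 1 may follow any `σ` by optimal play in the continuation games; hence the
recursive payoff of `(σ, head of T)` is at most the value. Symmetrically for `S`, so the first-stage
parts of `S` and `T` form a saddle point of the recursive payoff, with the value as its payoff.
-/

noncomputable section

section SaddlePoint

variable {α A B : Type*} [ConditionallyCompleteLattice α] {f : A → B → α} {a : A} {b : B} {v : α}

theorem iSup_iInf_eq_of_saddle (hf : ∀ a, BddBelow (Set.range (f a)))
    (hb : ∀ a', f a' b ≤ v) (ha : ∀ b', v ≤ f a b') : ⨆ a, ⨅ b, f a b = v := by
  have : Nonempty A := ⟨a⟩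
  have : Nonempty B := ⟨b⟩
  have iInf_le_value (a' : A) : ⨅ b', f a' b' ≤ v := ciInf_le_of_le (hf a') b (hb a')
  exact le_antisymm (ciSup_le iInf_le_value)
    (le_ciSup_of_le ⟨v, Set.forall_mem_range.2 iInf_le_value⟩ a (le_ciInf ha))

theorem iInf_iSup_eq_of_saddle (hf : ∀ b, BddAbove (Set.range (f · b)))
    (hb : ∀ a', f a' b ≤ v) (ha : ∀ b', v ≤ f a b') : ⨅ b, ⨆ a, f a b = v :=
  iSup_iInf_eq_of_saddle (α := αᵒᵈ) (f := fun b a => f a b) hf ha hb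

end SaddlePoint

section Minimax

variable {ι E F : Type*} [AddCommGroup E] [Module ℝ E] [AddCommGroup F] [Module ℝ F]
  {X : Set E} {Y : Set F}

theorem convexOn_tsum_linearMap (hX : Convex ℝ X) (f : ι → E →ₗ[ℝ] ℝ)
    (hf : ∀ x ∈ X, Summable fun m => f m x) : ConvexOn ℝ X fun x => ∑' m, f m x := by
  refine ⟨hX, fun x hx y hy a b _ _ _ => le_of_eq ?_⟩
  simp only [map_add, map_smul, smul_eq_mul]
  rw [((hf x hx).mul_left a).tsum_add ((hf y hy).mul_left b), tsum_mul_left, tsum_mul_left]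

theorem concaveOn_tsum_linearMap (hX : Convex ℝ X) (f : ι → E →ₗ[ℝ] ℝ)
    (hf : ∀ x ∈ X, Summable fun m => f m x) : ConcaveOn ℝ X fun x => ∑' m, f m x := by
  rw [← neg_convexOn_iff]
  refine (convexOn_tsum_linearMap hX (fun m => -f m) fun x hx => (hf x hx).neg).congr fun x _ => ?_
  exact tsum_neg

variable [TopologicalSpace E] [IsTopologicalAddGroup E] [ContinuousSMul ℝ E]
  [TopologicalSpace F] [IsTopologicalAddGroup F] [ContinuousSMul ℝ F]

theorem exists_isSaddlePointOn_tsum_bilinear (B : ι → E →ₗ[ℝ] F →ₗ[ℝ] ℝ) {u : ι → ℝ}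
    (hu : Summable u) (hBu : ∀ m, ∀ x ∈ X, ∀ y ∈ Y, ‖B m x y‖ ≤ u m)
    (hBX : ∀ m y, Continuous fun x => B m x y) (hBY : ∀ m x, Continuous (B m x))
    (hX : X.Nonempty) (hXconv : Convex ℝ X) (hXcomp : IsCompact X)
    (hY : Y.Nonempty) (hYconv : Convex ℝ Y) (hYcomp : IsCompact Y) :
    ∃ x ∈ X, ∃ y ∈ Y, IsSaddlePointOn X Y (fun x y => ∑' m, B m x y) x y := by
  have summable_of_mem {x : E} (hx : x ∈ X) {y : F} (hy : y ∈ Y) : Summable fun m => B m x y :=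
    hu.of_norm_bounded fun m => hBu m x hx y hy
  refine Sion.exists_isSaddlePointOn hX hXconv hXcomp ?_ ?_ hYconv hY hYcomp ?_ ?_
  · exact fun y hy => (continuousOn_tsum (fun m => (hBX m y).continuousOn) hu
      fun m x hx => hBu m x hx y hy).lowerSemicontinuousOn
  · exact fun y hy => (convexOn_tsum_linearMap hXconv (fun m => (B m).flip y)
      fun x hx => summable_of_mem hx hy).quasiconvexOn
  · exact fun x hx => (continuousOn_tsum (fun m => (hBY m x).continuousOn) hu
      fun m y hy => hBu m x hx y hy).upperSemicontinuousOn
  · exact fun x hx => (concaveOn_tsum_linearMap hYconv (fun m => B m x)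
      fun y hy => summable_of_mem hx hy).quasiconcaveOn

end Minimax

section StdSimplex

variable {A : Type*} [Fintype A]

theorem abs_sum_mul_le_of_mem_stdSimplex {p f : A → ℝ} {C : ℝ} (hp : p ∈ stdSimplex ℝ A)
    (hf : ∀ a, |f a| ≤ C) : |∑ a, p a * f a| ≤ C :=
  abs_le.2 <| (convex_Icc (-C) C).sum_mem (fun a _ => hp.1 a) hp.2 fun a _ => abs_le.1 (hf a)

theorem abs_sum_sum_mul_le_of_mem_stdSimplex {B : Type*} [Fintype B] {p : A → ℝ} {q : B → ℝ}
    {f : A → B → ℝ} {C : ℝ} (hp : p ∈ stdSimplex ℝ A) (hq : q ∈ stdSimplex ℝ B)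
    (hf : ∀ a b, |f a b| ≤ C) : |∑ a, ∑ b, p a * q b * f a b| ≤ C := by
  simp_rw [mul_assoc, ← Finset.mul_sum]
  exact abs_sum_mul_le_of_mem_stdSimplex hp fun a => abs_sum_mul_le_of_mem_stdSimplex hq (hf a)

theorem exists_mem_stdSimplex_sum_mul_eq [Nonempty A] {z : A → ℝ} (hz : ∀ a, 0 ≤ z a) :
    ∃ p ∈ stdSimplex ℝ A, ∀ a, (∑ b, z b) * p a = z a := by
  classical
  by_cases hsum : ∑ b, z b = 0
  · have z_eq_zero := (Fintype.sum_eq_zero_iff_of_nonneg hz).1 hsum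
    exact ⟨_, single_mem_stdSimplex ℝ (Classical.arbitrary A), fun a => by simp [z_eq_zero]⟩
  · refine ⟨fun a => z a / ∑ b, z b,
      ⟨fun a => div_nonneg (hz a) (Finset.sum_nonneg fun b _ => hz b), ?_⟩,
      fun a => mul_div_cancel₀ _ hsum⟩
    rw [← Finset.sum_div, div_self hsum]

end StdSimplex

section RealizationPlan

variable {C A : Type*}

/-- The factor contributed to the probability of a history by a player who follows the behavioral
strategy `s` and whose own action in the stage outcome `c` is `own c`. -/
def realizationWeight (own : C → A) (s : List C → A → ℝ) : List C → ℝ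
  | [] => 1
  | c :: h => s [] (own c) * realizationWeight own (fun h' => s (c :: h')) h

/-- The realization plan of the behavioral strategy `s`: the player's contribution to the
probability that the history is `h` and is followed by the action `a`. -/
def realizationPlan (own : C → A) (s : List C → A → ℝ) : List C → A → ℝ :=
  fun h a => realizationWeight own s h * s h a

/-- The polytope cut out by the linear constraints that characterise realization plans. -/
def realizationPlans [Fintype A] (own : C → A) : Set (List C → A → ℝ) :=
  {z | (∀ h a, 0 ≤ z h a) ∧ ∑ a, z [] a = 1 ∧ ∀ h c, ∑ a, z (h ++ [c]) a = z h (own c)}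

theorem realizationWeight_concat (own : C → A) (s : List C → A → ℝ) (h : List C) (c : C) :
    realizationWeight own s (h ++ [c]) = realizationPlan own s h (own c) := by
  induction h generalizing s with
  | nil => simp [realizationPlan, realizationWeight]
  | cons c' h ih => simp [realizationPlan, realizationWeight, ih, mul_assoc]

theorem realizationWeight_nonneg (own : C → A) {s : List C → A → ℝ} (hs : ∀ h a, 0 ≤ s h a)
    (h : List C) : 0 ≤ realizationWeight own s h := by
  induction h generalizing s with
  | nil => exact zero_le_one
  | cons c h ih => exact mul_nonneg (hs _ _) (ih fun _ _ => hs _ _)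

theorem probH_eq_mul_realizationWeight {I J : Type*} (s : List (I × J) → I → ℝ)
    (t : List (I × J) → J → ℝ) (h : List (I × J)) :
    probH s t h = realizationWeight Prod.fst s h * realizationWeight Prod.snd t h := by
  induction h generalizing s t with
  | nil => simp [realizationWeight, probH]
  | cons c h ih =>
    simp only [realizationWeight, probH, ih]
    ring

variable [Fintype A] {own : C → A}

theorem realizationPlan_mem (own : C → A) {s : List C → A → ℝ} (hs : ∀ h, s h ∈ stdSimplex ℝ A) :
    realizationPlan own s ∈ realizationPlans own := by
  have sum_eq_weight (h : List C) : ∑ a, realizationPlan own s h a = realizationWeight own s h := by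
    simp only [realizationPlan, ← Finset.mul_sum, (hs h).2, mul_one]
  refine ⟨fun h a => ?_, sum_eq_weight [], fun h c => ?_⟩
  · exact mul_nonneg (realizationWeight_nonneg own (fun h => (hs h).1) h) ((hs h).1 a)
  · rw [sum_eq_weight, realizationWeight_concat]

theorem exists_realizationPlan_eq [Nonempty A] {z : List C → A → ℝ}
    (hz : z ∈ realizationPlans own) :
    ∃ s, (∀ h, s h ∈ stdSimplex ℝ A) ∧ realizationPlan own s = z := by
  choose s hs sum_mul_eq using fun h => exists_mem_stdSimplex_sum_mul_eq (hz.1 h)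
  have weight_eq_sum (h : List C) : realizationWeight own s h = ∑ a, z h a := by
    induction h using List.reverseRecOn with
    | nil => exact hz.2.1.symm
    | append_singleton h c ih =>
      rw [realizationWeight_concat, realizationPlan, ih, sum_mul_eq, hz.2.2]
  refine ⟨s, hs, ?_⟩
  ext h a
  rw [realizationPlan, weight_eq_sum, sum_mul_eq]

theorem le_one_of_mem_realizationPlans {z : List C → A → ℝ} (hz : z ∈ realizationPlans own)
    (h : List C) (a : A) : z h a ≤ 1 := by
  have le_sum (h : List C) (a : A) : z h a ≤ ∑ a, z h a :=
    Finset.single_le_sum (fun a _ => hz.1 h a) (Finset.mem_univ a)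
  have sum_le_one : ∑ a, z h a ≤ 1 := by
    induction h using List.reverseRecOn with
    | nil => exact hz.2.1.le
    | append_singleton h c ih => exact (hz.2.2 h c).trans_le ((le_sum h _).trans ih)
  exact (le_sum h a).trans sum_le_one

variable (own)

theorem isClosed_realizationPlans : IsClosed (realizationPlans own) := by
  simp only [realizationPlans, Set.ofPred_and, Set.ofPred_forall]
  refine .inter ?_ (.inter ?_ ?_)
  · exact isClosed_iInter fun h => isClosed_iInter fun a =>
      isClosed_le continuous_const (by fun_prop)
  · exact isClosed_eq (by fun_prop) continuous_const
  · exact isClosed_iInter fun h => isClosed_iInter fun c =>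
      isClosed_eq (by fun_prop) (by fun_prop)

theorem isCompact_realizationPlans : IsCompact (realizationPlans own) := by
  have isCompact_cube : IsCompact (Set.univ.pi fun _ : List C => Set.univ.pi fun _ : A =>
      Set.Icc (0 : ℝ) 1) :=
    isCompact_univ_pi fun _ => isCompact_univ_pi fun _ => isCompact_Icc
  exact isCompact_cube.of_isClosed_subset (isClosed_realizationPlans own)
    fun z hz h _ a _ => ⟨hz.1 h a, le_one_of_mem_realizationPlans hz h a⟩

theorem convex_realizationPlans : Convex ℝ (realizationPlans own) := by
  rintro z ⟨hz_nonneg, hz_nil, hz_concat⟩ w ⟨hw_nonneg, hw_nil, hw_concat⟩ a b ha hb hab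
  refine ⟨fun h x => ?_, ?_, fun h c => ?_⟩
  · exact add_nonneg (mul_nonneg ha (hz_nonneg h x)) (mul_nonneg hb (hw_nonneg h x))
  · simp [Finset.sum_add_distrib, ← Finset.mul_sum, hz_nil, hw_nil, hab]
  · simp [Finset.sum_add_distrib, ← Finset.mul_sum, hz_concat, hw_concat]

end RealizationPlan

section StratPlan

variable {I J X A : Type*} [Fintype A] (own : I × J → A)

/-- The realization plans of a type-dependent strategy, one for each type. -/
def Strat.plan (s : Strat I J X A) : X → List (I × J) → A → ℝ :=
  fun x => realizationPlan own (s.1 x)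

variable [Nonempty A]

theorem Strat.range_plan :
    Set.range (Strat.plan (X := X) own) = Set.univ.pi fun _ => realizationPlans own := by
  ext z
  refine ⟨?_, fun hz => ?_⟩
  · rintro ⟨s, rfl⟩ x -
    exact realizationPlan_mem own (s.2 x)
  · choose s hs plan_eq using fun x => exists_realizationPlan_eq (hz x trivial)
    exact ⟨⟨s, hs⟩, funext plan_eq⟩

theorem Strat.isCompact_range_plan : IsCompact (Set.range (Strat.plan (X := X) own)) := by
  rw [Strat.range_plan]
  exact isCompact_univ_pi fun _ => isCompact_realizationPlans own

theorem Strat.convex_range_plan : Convex ℝ (Set.range (Strat.plan (X := X) own)) := by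
  rw [Strat.range_plan]
  exact convex_pi fun _ _ => convex_realizationPlans own

end StratPlan

section StagePay

variable {I J : Type*} [Fintype I] [Fintype J]

theorem stagePay_zero (s : List (I × J) → I → ℝ) (t : List (I × J) → J → ℝ) (g : I → J → ℝ) :
    stagePay s t g 0 = ∑ i, ∑ j, s [] i * t [] j * g i j := by
  simp [stagePay, probH]

theorem stagePay_succ (s : List (I × J) → I → ℝ) (t : List (I × J) → J → ℝ) (g : I → J → ℝ)
    (m : ℕ) :
    stagePay s t g (m + 1) = ∑ i, ∑ j, s [] i * t [] j *
      stagePay (fun h => s ((i, j) :: h)) (fun h => t ((i, j) :: h)) g m := by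
  unfold stagePay
  rw [← (Fin.consEquiv fun _ : Fin (m + 1) => I × J).sum_comp, Fintype.sum_prod_type,
    Fintype.sum_prod_type]
  simp [Fin.consEquiv, List.ofFn_succ, probH, mul_assoc, Finset.mul_sum]

theorem abs_stagePay_le {s : List (I × J) → I → ℝ} {t : List (I × J) → J → ℝ}
    (hs : ∀ h, s h ∈ stdSimplex ℝ I) (ht : ∀ h, t h ∈ stdSimplex ℝ J) (g : I → J → ℝ) (m : ℕ) :
    |stagePay s t g m| ≤ ‖g‖ := by
  induction m generalizing s t with
  | zero =>
    rw [stagePay_zero]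
    exact abs_sum_sum_mul_le_of_mem_stdSimplex (hs []) (ht []) fun i j =>
      (norm_le_pi_norm (g i) j).trans (norm_le_pi_norm g i)
  | succ m ih =>
    rw [stagePay_succ]
    exact abs_sum_sum_mul_le_of_mem_stdSimplex (hs []) (ht []) fun i j =>
      ih (fun _ => hs _) fun _ => ht _

theorem summable_mul_stagePay {θ : ℕ → ℝ} (hθ : Summable θ) {s : List (I × J) → I → ℝ}
    {t : List (I × J) → J → ℝ} (hs : ∀ h, s h ∈ stdSimplex ℝ I) (ht : ∀ h, t h ∈ stdSimplex ℝ J)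
    (g : I → J → ℝ) : Summable fun m => θ m * stagePay s t g m := by
  refine (hθ.abs.mul_right ‖g‖).of_norm_bounded fun m => ?_
  rw [Real.norm_eq_abs, abs_mul]
  gcongr
  exact abs_stagePay_le hs ht g m

end StagePay

section Payoff

variable {I J K L : Type*} [Fintype I] [Fintype J] [Fintype K] [Fintype L]
  {θ : ℕ → ℝ} (G : K → L → I → J → ℝ) (π : K × L → ℝ) (s : Strat I J K I) (t : Strat I J L J)

/-- The payoff of stage `m + 1`, averaged over the types with weights `π`. -/
def expStagePay (m : ℕ) : ℝ :=
  ∑ k, ∑ l, π (k, l) * stagePay (s.1 k) (t.1 l) (G k l) m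

theorem abs_expStagePay_le (m : ℕ) :
    |expStagePay G π s t m| ≤ ∑ k, ∑ l, |π (k, l)| * ‖G‖ := by
  refine (Finset.abs_sum_le_sum_abs _ _).trans (Finset.sum_le_sum fun k _ => ?_)
  refine (Finset.abs_sum_le_sum_abs _ _).trans (Finset.sum_le_sum fun l _ => ?_)
  rw [abs_mul]
  gcongr
  calc |stagePay (s.1 k) (t.1 l) (G k l) m| ≤ ‖G k l‖ := abs_stagePay_le (s.2 k) (t.2 l) (G k l) m
    _ ≤ ‖G k‖ := norm_le_pi_norm (G k) l
    _ ≤ ‖G‖ := norm_le_pi_norm G k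

theorem norm_mul_expStagePay_le (θ : ℕ → ℝ) (m : ℕ) :
    ‖θ m * expStagePay G π s t m‖ ≤ |θ m| * ∑ k, ∑ l, |π (k, l)| * ‖G‖ := by
  rw [Real.norm_eq_abs, abs_mul]
  gcongr
  exact abs_expStagePay_le G π s t m

theorem summable_mul_expStagePay (hθ : Summable θ) :
    Summable fun m => θ m * expStagePay G π s t m :=
  (hθ.abs.mul_right _).of_norm_bounded (norm_mul_expStagePay_le G π s t θ)

theorem pay_eq_tsum (hθ : Summable θ) :
    pay θ G π s t = ∑' m, θ m * expStagePay G π s t m := by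
  have summable_term (k : K) (l : L) :
      Summable fun m => π (k, l) * (θ m * stagePay (s.1 k) (t.1 l) (G k l) m) :=
    (summable_mul_stagePay hθ (s.2 k) (t.2 l) (G k l)).mul_left _
  simp only [pay, payA, mul_one, expStagePay, Finset.mul_sum, mul_left_comm (θ _),
    ← tsum_mul_left]
  rw [Summable.tsum_finsetSum fun k _ => summable_sum fun l _ => summable_term k l]
  exact Finset.sum_congr rfl fun k _ =>
    (Summable.tsum_finsetSum fun l _ => summable_term k l).symm

theorem abs_pay_le (hθ : Summable θ) :
    |pay θ G π s t| ≤ ∑' m, |θ m| * ∑ k, ∑ l, |π (k, l)| * ‖G‖ := by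
  rw [pay_eq_tsum G π s t hθ]
  exact tsum_of_norm_bounded (hθ.abs.mul_right _).hasSum (norm_mul_expStagePay_le G π s t θ)

end Payoff

section OptimalStrategies

variable {I J K L : Type*} [Fintype I] [Fintype J] [Fintype K] [Fintype L]
  {θ : ℕ → ℝ} (G : K → L → I → J → ℝ) (π : K × L → ℝ)

/-- The payoff of stage `m + 1` as a bilinear form in the realization plans of the players. -/
def planStagePay (m : ℕ) :
    (K → List (I × J) → I → ℝ) →ₗ[ℝ] (L → List (I × J) → J → ℝ) →ₗ[ℝ] ℝ :=
  LinearMap.mk₂ ℝ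
    (fun z w => ∑ k, ∑ l, π (k, l) * ∑ h : Fin m → I × J, ∑ i, ∑ j,
      z k (List.ofFn h) i * w l (List.ofFn h) j * G k l i j)
    (fun _ _ _ => by simp [add_mul, mul_add, Finset.sum_add_distrib])
    (fun _ _ _ => by simp [Finset.mul_sum, mul_assoc, mul_left_comm])
    (fun _ _ _ => by simp [add_mul, mul_add, Finset.sum_add_distrib])
    (fun _ _ _ => by simp [Finset.mul_sum, mul_assoc, mul_left_comm])

theorem expStagePay_eq_planStagePay (s : Strat I J K I) (t : Strat I J L J) (m : ℕ) :
    expStagePay G π s t m = planStagePay G π m (s.plan Prod.fst) (t.plan Prod.snd) := by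
  simp only [expStagePay, stagePay, planStagePay, LinearMap.mk₂_apply, Strat.plan, realizationPlan,
    probH_eq_mul_realizationWeight, Finset.mul_sum]
  congr! 5
  ring

theorem continuous_planStagePay_left (m : ℕ) (w : L → List (I × J) → J → ℝ) :
    Continuous fun z => planStagePay G π m z w := by
  simp only [planStagePay, LinearMap.mk₂_apply]
  fun_prop

theorem continuous_planStagePay_right (m : ℕ) (z : K → List (I × J) → I → ℝ) :
    Continuous (planStagePay G π m z) := by
  change Continuous fun w => planStagePay G π m z w
  simp only [planStagePay, LinearMap.mk₂_apply]
  fun_prop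

variable [Nonempty I] [Nonempty J]

theorem exists_saddle_pay (hθ : Summable θ) :
    ∃ (s : Strat I J K I) (t : Strat I J L J), ∀ s' t', pay θ G π s' t ≤ pay θ G π s t' := by
  let B (m : ℕ) := θ m • (planStagePay G π m).flip
  have B_plan (s : Strat I J K I) (t : Strat I J L J) (m : ℕ) :
      B m (t.plan Prod.snd) (s.plan Prod.fst) = θ m * expStagePay G π s t m := by
    simp [B, expStagePay_eq_planStagePay]
  have norm_B_le (m : ℕ) : ∀ w ∈ Set.range (Strat.plan Prod.snd),
      ∀ z ∈ Set.range (Strat.plan Prod.fst),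
        ‖B m w z‖ ≤ |θ m| * ∑ k, ∑ l, |π (k, l)| * ‖G‖ := by
    rintro _ ⟨t, rfl⟩ _ ⟨s, rfl⟩
    rw [B_plan]
    exact norm_mul_expStagePay_le G π s t θ m
  obtain ⟨_, ⟨t, rfl⟩, _, ⟨s, rfl⟩, saddle⟩ :=
    exists_isSaddlePointOn_tsum_bilinear B (hθ.abs.mul_right _) norm_B_le
      (fun m z => (continuous_planStagePay_right G π m z).const_smul (θ m))
      (fun m w => (continuous_planStagePay_left G π m w).const_smul (θ m))
      (Set.range_nonempty _) (Strat.convex_range_plan _) (Strat.isCompact_range_plan _)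
      (Set.range_nonempty _) (Strat.convex_range_plan _) (Strat.isCompact_range_plan _)
  refine ⟨s, t, fun s' t' => ?_⟩
  rw [pay_eq_tsum G π s' t hθ, pay_eq_tsum G π s t' hθ]
  simpa only [B_plan] using saddle _ ⟨t', rfl⟩ _ ⟨s', rfl⟩

theorem exists_optimal (hθ : Summable θ) :
    ∃ (s : Strat I J K I) (t : Strat I J L J),
      (∀ s', pay θ G π s' t ≤ vPlus θ G π) ∧ ∀ t', vPlus θ G π ≤ pay θ G π s t' := by
  obtain ⟨s, t, saddle⟩ := exists_saddle_pay G π hθ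
  have vPlus_eq : vPlus θ G π = pay θ G π s t :=
    iInf_iSup_eq_of_saddle
      (fun t => ⟨_, Set.forall_mem_range.2 fun s => (abs_le.1 (abs_pay_le G π s t hθ)).2⟩)
      (fun s' => saddle s' t) (fun t' => saddle s t')
  rw [vPlus_eq]
  exact ⟨s, t, fun s' => saddle s' t, fun t' => saddle s t'⟩

end OptimalStrategies

namespace Strat

variable {I J X A : Type*} [Fintype A]

/-- The first-stage part of a strategy. -/
def head (s : Strat I J X A) : OneStage X A :=
  ⟨fun x => s.1 x [], fun x => s.2 x []⟩

/-- The strategy followed from the second stage on, after the first-stage actions `c`. -/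
def tail (s : Strat I J X A) (c : I × J) : Strat I J X A :=
  ⟨fun x h => s.1 x (c :: h), fun x h => s.2 x (c :: h)⟩

/-- The strategy that plays `σ` at the first stage and continues with `s c` after the first-stage
actions `c`. Its `head` and `tail` are `σ` and `s` by definition. -/
def cons (σ : OneStage X A) (s : I × J → Strat I J X A) : Strat I J X A :=
  ⟨fun x => fun | [] => σ.1 x | c :: h => (s c).1 x h,
    fun x => fun | [] => σ.2 x | c :: h => (s c).2 x h⟩

end Strat

section Recursion

variable {I J K L : Type*} [Fintype I] [Fintype J] [Fintype K] [Fintype L]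
  {θ : ℕ → ℝ} (G : K → L → I → J → ℝ) (π : K × L → ℝ)

/-- The paper's `P^π_{στ}(k, ℓ, i, j)`, read as a weight on the types `(k, ℓ)`: the unnormalised
posterior after the first-stage actions `(i, j)`. -/
def jointLaw (π : K × L → ℝ) (σ : OneStage K I) (τ : OneStage L J) (i : I) (j : J) : K × L → ℝ :=
  fun kl => π kl * σ.1 kl.1 i * τ.1 kl.2 j

/-- The paper's expected first-stage payoff `G^π_{στ}`. -/
def oneStagePay (σ : OneStage K I) (τ : OneStage L J) : ℝ :=
  ∑ k, ∑ l, ∑ i, ∑ j, π (k, l) * σ.1 k i * τ.1 l j * G k l i j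

/-- The one-stage payoff whose continuation payoffs are the values of the games with weights
`θ_2, θ_3, …` and unnormalised posteriors as priors. Neither is normalised: by homogeneity of
`vPlus` this is the payoff in the recursive formula. -/
def recursivePay (θ : ℕ → ℝ) (σ : OneStage K I) (τ : OneStage L J) : ℝ :=
  θ 0 * oneStagePay G π σ τ +
    ∑ i, ∑ j, vPlus (fun m => θ (m + 1)) G (jointLaw π σ τ i j)

theorem expStagePay_zero (s : Strat I J K I) (t : Strat I J L J) :
    expStagePay G π s t 0 = oneStagePay G π s.head t.head := by
  simp only [expStagePay, stagePay_zero, oneStagePay, Strat.head, Finset.mul_sum, mul_assoc]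

theorem expStagePay_succ (s : Strat I J K I) (t : Strat I J L J) (m : ℕ) :
    expStagePay G π s t (m + 1) =
      ∑ i, ∑ j, expStagePay G (jointLaw π s.head t.head i j) (s.tail (i, j)) (t.tail (i, j)) m := by
  simp only [expStagePay, stagePay_succ, jointLaw, Strat.head, Strat.tail, Finset.mul_sum,
    mul_assoc]
  simp_rw [Finset.sum_comm (γ := L), Finset.sum_comm (γ := K)]

theorem pay_eq_oneStagePay_add (hθ : Summable θ) (s : Strat I J K I) (t : Strat I J L J) :
    pay θ G π s t = θ 0 * oneStagePay G π s.head t.head +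
      ∑ i, ∑ j, pay (fun m => θ (m + 1)) G (jointLaw π s.head t.head i j)
        (s.tail (i, j)) (t.tail (i, j)) := by
  have hθ_succ : Summable fun m => θ (m + 1) := (summable_nat_add_iff 1).2 hθ
  have summable_term (i : I) (j : J) : Summable fun m => θ (m + 1) *
      expStagePay G (jointLaw π s.head t.head i j) (s.tail (i, j)) (t.tail (i, j)) m :=
    summable_mul_expStagePay G _ _ _ hθ_succ
  rw [pay_eq_tsum G π s t hθ, (summable_mul_expStagePay G π s t hθ).tsum_eq_zero_add,
    expStagePay_zero]
  simp only [expStagePay_succ, Finset.mul_sum, pay_eq_tsum G _ _ _ hθ_succ]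
  rw [Summable.tsum_finsetSum fun i _ => summable_sum fun j _ => summable_term i j]
  congr! 2 with i
  exact Summable.tsum_finsetSum fun j _ => summable_term i j

variable [Nonempty I] [Nonempty J]

theorem exists_recursivePay_le_pay (hθ : Summable θ) (σ : OneStage K I) (t : Strat I J L J) :
    ∃ s, recursivePay G π θ σ t.head ≤ pay θ G π s t := by
  choose opt _ _ le_pay using fun c : I × J =>
    exists_optimal G (jointLaw π σ t.head c.1 c.2) ((summable_nat_add_iff 1).2 hθ)
  refine ⟨Strat.cons σ opt, ?_⟩
  rw [pay_eq_oneStagePay_add G π hθ]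
  exact add_le_add_right
    (Finset.sum_le_sum fun i _ => Finset.sum_le_sum fun j _ => le_pay (i, j) (t.tail (i, j))) _

theorem exists_pay_le_recursivePay (hθ : Summable θ) (s : Strat I J K I) (τ : OneStage L J) :
    ∃ t, pay θ G π s t ≤ recursivePay G π θ s.head τ := by
  choose _ opt pay_le _ using fun c : I × J =>
    exists_optimal G (jointLaw π s.head τ c.1 c.2) ((summable_nat_add_iff 1).2 hθ)
  refine ⟨Strat.cons τ opt, ?_⟩
  rw [pay_eq_oneStagePay_add G π hθ]
  exact add_le_add_right
    (Finset.sum_le_sum fun i _ => Finset.sum_le_sum fun j _ => pay_le (i, j) (s.tail (i, j))) _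

theorem abs_recursivePay_le (hθ : Summable θ) (σ : OneStage K I) (τ : OneStage L J) :
    |recursivePay G π θ σ τ| ≤ ∑' m, |θ m| * ∑ k, ∑ l, |π (k, l)| * ‖G‖ := by
  obtain ⟨s, le_pay⟩ :=
    exists_recursivePay_le_pay G π hθ σ (Strat.cons τ fun _ => Classical.arbitrary _)
  obtain ⟨t, pay_le⟩ :=
    exists_pay_le_recursivePay G π hθ (Strat.cons σ fun _ => Classical.arbitrary _) τ
  exact abs_le.2 ⟨(abs_le.1 (abs_pay_le G π _ t hθ)).1.trans pay_le,
    le_pay.trans (abs_le.1 (abs_pay_le G π s _ hθ)).2⟩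

theorem exists_saddle_recursivePay (hθ : Summable θ) :
    ∃ (σ : OneStage K I) (τ : OneStage L J), (∀ σ', recursivePay G π θ σ' τ ≤ vPlus θ G π) ∧
      ∀ τ', vPlus θ G π ≤ recursivePay G π θ σ τ' := by
  obtain ⟨s, t, pay_le, le_pay⟩ := exists_optimal G π hθ
  refine ⟨s.head, t.head, fun σ' => ?_, fun τ' => ?_⟩
  · obtain ⟨s', hs'⟩ := exists_recursivePay_le_pay G π hθ σ' t
    exact hs'.trans (pay_le s')
  · obtain ⟨t', ht'⟩ := exists_pay_le_recursivePay G π hθ s τ'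
    exact (le_pay t').trans ht'

theorem vPlus_eq_iSup_iInf_recursivePay (hθ : Summable θ) :
    vPlus θ G π = ⨆ σ : OneStage K I, ⨅ τ : OneStage L J, recursivePay G π θ σ τ := by
  obtain ⟨_, _, le_value, value_le⟩ := exists_saddle_recursivePay G π hθ
  exact (iSup_iInf_eq_of_saddle (fun σ => ⟨_, Set.forall_mem_range.2 fun τ =>
    (abs_le.1 (abs_recursivePay_le G π hθ σ τ)).1⟩) le_value value_le).symm

theorem vPlus_eq_iInf_iSup_recursivePay (hθ : Summable θ) :
    vPlus θ G π = ⨅ τ : OneStage L J, ⨆ σ : OneStage K I, recursivePay G π θ σ τ := by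
  obtain ⟨_, _, le_value, value_le⟩ := exists_saddle_recursivePay G π hθ
  exact (iInf_iSup_eq_of_saddle (fun τ => ⟨_, Set.forall_mem_range.2 fun σ =>
    (abs_le.1 (abs_recursivePay_le G π hθ σ τ)).2⟩) le_value value_le).symm

end Recursion

section Homogeneity

variable {I J K L : Type*} [Fintype I] [Fintype J] [Fintype K] [Fintype L]
  (G : K → L → I → J → ℝ) {c : ℝ}

theorem vPlus_eq_mul_of_pay_eq_mul {θ θ' : ℕ → ℝ} {μ μ' : K × L → ℝ} (hc : 0 ≤ c)
    (hpay : ∀ s t, pay θ' G μ' s t = c * pay θ G μ s t) : vPlus θ' G μ' = c * vPlus θ G μ := by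
  simp only [vPlus, hpay, Real.mul_iInf_of_nonneg hc, Real.mul_iSup_of_nonneg hc]

theorem vPlus_const_mul_eval (hc : 0 ≤ c) (θ : ℕ → ℝ) (μ : K × L → ℝ) :
    vPlus (fun m => c * θ m) G μ = c * vPlus θ G μ :=
  vPlus_eq_mul_of_pay_eq_mul G hc fun s t => by
    simp only [pay, payA, one_mul, mul_assoc, tsum_mul_left, Finset.mul_sum]
    exact Finset.sum_congr rfl fun k _ => Finset.sum_congr rfl fun l _ => mul_left_comm _ _ _

theorem vPlus_const_mul_prior (hc : 0 ≤ c) (θ : ℕ → ℝ) (μ : K × L → ℝ) :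
    vPlus θ G (fun kl => c * μ kl) = c * vPlus θ G μ :=
  vPlus_eq_mul_of_pay_eq_mul G hc fun s t => by
    simp only [pay, payA, mul_assoc, Finset.mul_sum]

theorem ite_mass_mul_vPlus_normalized (θ : ℕ → ℝ) {μ : K × L → ℝ} (hμ : ∀ kl, 0 ≤ μ kl) {P : ℝ}
    (hP : P = ∑ k, ∑ l, μ (k, l)) :
    (if 0 < P then P * vPlus θ G (fun kl => μ kl / P) else 0) = vPlus θ G μ := by
  rw [← Fintype.sum_prod_type] at hP
  split_ifs with hpos
  · rw [← vPlus_const_mul_prior G hpos.le]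
    simp only [mul_div_cancel₀ _ hpos.ne']
  · have P_eq_zero : P = 0 := (not_lt.1 hpos).antisymm (hP ▸ Finset.sum_nonneg fun kl _ => hμ kl)
    have μ_eq_zero : μ = 0 := (Fintype.sum_eq_zero_iff_of_nonneg hμ).1 (hP ▸ P_eq_zero)
    have vPlus_zero : vPlus θ G (fun _ => 0) = 0 := by
      simpa only [zero_mul] using vPlus_const_mul_prior G le_rfl θ μ
    rw [μ_eq_zero]
    exact vPlus_zero.symm

end Homogeneity

end

theorem stmt_10_general
    {K L I J : Type*} [Fintype K] [Fintype L] [Fintype I] [Fintype J]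
    [Nonempty I] [Nonempty J]
    (G : K → L → I → J → ℝ)
    (θ : ℕ → ℝ) (hθ : Summable θ) (hθlt : θ 0 < 1)
    (θplus : ℕ → ℝ) (hθplus : ∀ m, θplus m = θ (m + 1) / (1 - θ 0))
    (π : K × L → ℝ) (hπ : ∀ kl, 0 ≤ π kl)
    (Pij : OneStage K I → OneStage L J → I → J → ℝ)
    (hPij : ∀ σ τ i j, Pij σ τ i j = ∑ k, ∑ l, π (k, l) * σ.1 k i * τ.1 l j)
    (πij : OneStage K I → OneStage L J → I → J → K × L → ℝ)
    (hπij : ∀ σ τ i j kl, πij σ τ i j kl =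
      π kl * σ.1 kl.1 i * τ.1 kl.2 j / Pij σ τ i j)
    (Gexp : OneStage K I → OneStage L J → ℝ)
    (hGexp : ∀ σ τ, Gexp σ τ =
      ∑ k, ∑ l, ∑ i, ∑ j, π (k, l) * σ.1 k i * τ.1 l j * G k l i j)
    (recval : OneStage K I → OneStage L J → ℝ)
    (hrecval : ∀ σ τ, recval σ τ =
      θ 0 * Gexp σ τ +
        (1 - θ 0) * ∑ i, ∑ j,
          if 0 < Pij σ τ i j then Pij σ τ i j * vPlus θplus G (πij σ τ i j)
          else 0) :
    vPlus θ G π = (⨆ σ : OneStage K I, ⨅ τ : OneStage L J, recval σ τ) ∧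
    vPlus θ G π = (⨅ τ : OneStage L J, ⨆ σ : OneStage K I, recval σ τ) := by
  have c_pos : 0 < 1 - θ 0 := sub_pos.2 hθlt
  have recval_eq : recval = recursivePay G π θ := by
    ext σ τ
    have hshift : (fun m => θ (m + 1)) = fun m => (1 - θ 0) * θplus m :=
      funext fun m => by rw [hθplus, mul_div_cancel₀ _ c_pos.ne']
    have jointLaw_nonneg (i : I) (j : J) (kl : K × L) : 0 ≤ jointLaw π σ τ i j kl :=
      mul_nonneg (mul_nonneg (hπ kl) ((σ.2 kl.1).1 i)) ((τ.2 kl.2).1 j)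
    have continuation_eq (i : I) (j : J) :
        (if 0 < Pij σ τ i j then Pij σ τ i j * vPlus θplus G (πij σ τ i j) else 0) =
          vPlus θplus G (jointLaw π σ τ i j) := by
      rw [← ite_mass_mul_vPlus_normalized G θplus (jointLaw_nonneg i j) (hPij σ τ i j),
        funext (hπij σ τ i j)]
      rfl
    rw [hrecval, hGexp, recursivePay, oneStagePay, hshift]
    simp only [continuation_eq, vPlus_const_mul_eval G c_pos.le, Finset.mul_sum]
  rw [recval_eq]
  exact ⟨vPlus_eq_iSup_iInf_recursivePay G π hθ, vPlus_eq_iInf_iSup_recursivePay G π hθ⟩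

/-- the primal recursive formula (Mertens–Zamir): the value
`v_θ(π)` (the common value of maxmin and minmax, here the minmax `vPlus`) is
the sup-inf and the inf-sup, over first-stage strategies `σ ∈ Δ(I)^K` and
`τ ∈ Δ(J)^L`, of
`θ_1 G^π_{στ} + (1−θ_1) Σ_{(i,j) : P^π_{στ}(i,j)>0} P^π_{στ}(i,j) v_{θ⁺}(π_{ij})`.
Stages are indexed from `0`, so `θ 0 = θ_1`. -/
theorem stmt_10
    {K L I J : Type*} [Fintype K] [Fintype L] [Fintype I] [Fintype J]
    [Nonempty K] [Nonempty L] [Nonempty I] [Nonempty J]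
    (G : K → L → I → J → ℝ)
    (θ : ℕ → ℝ) (hθ0 : ∀ m, 0 ≤ θ m) (hθ1 : HasSum θ 1) (hθlt : θ 0 < 1)
    (θplus : ℕ → ℝ) (hθplus : ∀ m, θplus m = θ (m + 1) / (1 - θ 0))
    (π : K × L → ℝ) (hπ : π ∈ stdSimplex ℝ (K × L))
    (Pij : OneStage K I → OneStage L J → I → J → ℝ)
    (hPij : ∀ σ τ i j, Pij σ τ i j = ∑ k, ∑ l, π (k, l) * σ.1 k i * τ.1 l j)
    (πij : OneStage K I → OneStage L J → I → J → K × L → ℝ)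
    (hπij : ∀ σ τ i j kl, πij σ τ i j kl =
      π kl * σ.1 kl.1 i * τ.1 kl.2 j / Pij σ τ i j)
    (Gexp : OneStage K I → OneStage L J → ℝ)
    (hGexp : ∀ σ τ, Gexp σ τ =
      ∑ k, ∑ l, ∑ i, ∑ j, π (k, l) * σ.1 k i * τ.1 l j * G k l i j)
    (recval : OneStage K I → OneStage L J → ℝ)
    (hrecval : ∀ σ τ, recval σ τ =
      θ 0 * Gexp σ τ +
        (1 - θ 0) * ∑ i, ∑ j,
          if 0 < Pij σ τ i j then Pij σ τ i j * vPlus θplus G (πij σ τ i j)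
          else 0) :
    vPlus θ G π = (⨆ σ : OneStage K I, ⨅ τ : OneStage L J, recval σ τ) ∧
    vPlus θ G π = (⨅ τ : OneStage L J, ⨆ σ : OneStage K I, recval σ τ) :=
  stmt_10_general G θ hθ1.summable hθlt θplus hθplus π hπ.1 Pij hPij πij hπij Gexp hGexp
    recval hrecval
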